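/- arXiv:2508.07933 — 2 statements merged into one kernel-verified Lean document; each statement's English description precedes it below -/
import Mathlib

section
/- A multipartite pure quantum state, i.e., a unit vector $\psi \in H_1 \otimes \cdots \otimes H_k$ (each $H_i \cong \mathbb{C}^{d_i}$ with the Euclidean norm, $\|\psi\|_2 = 1$), is separable (equal to a product tensor $\psi_1 \otimes \cdots \otimes \psi_k$) if and only if its injective and projective tensor norms both equal $1$: $\|\psi\|_\epsilon = \|\psi\|_\pi = 1$. -/
/-- The simple (product) tensor `x¹ ⊗ ⋯ ⊗ xᵏ` of a family of vectors `x i ∈ ℂ^{d i}`,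
realized as the multi-dimensional array `j ↦ ∏ i, x i (j i)` in the Hilbert space
`H₁ ⊗ ⋯ ⊗ H_k ≅ ℂ^{∏ d i}`. -/
noncomputable def eTprod {k : ℕ} {d : Fin k → ℕ} (x : Π i, EuclideanSpace ℂ (Fin (d i))) :
    EuclideanSpace ℂ (Π i, Fin (d i)) :=
  (WithLp.equiv 2 _).symm fun j => ∏ i, x i (j i)

/-- The projective tensor norm on `H₁ ⊗ ⋯ ⊗ H_k` (each factor `ℓ₂^{d i}`). -/
noncomputable def projNormE {k : ℕ} {d : Fin k → ℕ}
    (T : EuclideanSpace ℂ (Π i, Fin (d i))) : ℝ :=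
  sInf {s | ∃ (r : ℕ) (x : Fin r → Π i, EuclideanSpace ℂ (Fin (d i))),
    T = ∑ j, eTprod (x j) ∧ s = ∑ j, ∏ i, ‖x j i‖}

/-- The injective tensor norm on `H₁ ⊗ ⋯ ⊗ H_k` (each factor `ℓ₂^{d i}`):
the supremum of `|⟨α¹ ⊗ ⋯ ⊗ αᵏ, T⟩|` over families of vectors in the unit balls. -/
noncomputable def injNormE {k : ℕ} {d : Fin k → ℕ}
    (T : EuclideanSpace ℂ (Π i, Fin (d i))) : ℝ :=
  sSup {s | ∃ a : Π i, EuclideanSpace ℂ (Fin (d i)),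
    (∀ i, ‖a i‖ ≤ 1) ∧ s = ‖(inner ℂ (eTprod a) T : ℂ)‖}

/-!
Normalizing the factors of each summand in a decomposition of `T` into product tensors yields the
duality `‖⟪S, T⟫‖ ≤ ‖S‖_ε ‖T‖_π`; with `S = T` this is `‖T‖ ^ 2 ≤ ‖T‖_ε ‖T‖_π`, while `‖T‖_ε ≤ ‖T‖`
by Cauchy–Schwarz. Hence a unit tensor of projective norm `1` also has injective norm `1`. By
compactness the injective norm is attained at some product tensor, and equality in Cauchy–Schwarz
makes `T` a scalar multiple of it. The scalar is absorbed into one of the factors.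
-/

section ProductTensor

variable {k : ℕ} {d : Fin k → ℕ}

theorem eTprod_apply (x : Π i, EuclideanSpace ℂ (Fin (d i))) (j : Π i, Fin (d i)) :
    eTprod x j = ∏ i, x i (j i) := rfl

theorem norm_eTprod (x : Π i, EuclideanSpace ℂ (Fin (d i))) : ‖eTprod x‖ = ∏ i, ‖x i‖ := by
  have norm_sq_eq : ‖eTprod x‖ ^ 2 = (∏ i, ‖x i‖) ^ 2 := by
    simp only [EuclideanSpace.norm_sq_eq, eTprod_apply, norm_prod, ← Finset.prod_pow,
      Finset.prod_univ_sum, Fintype.piFinset_univ]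
  exact (pow_left_inj₀ (norm_nonneg _) (Finset.prod_nonneg fun i _ => norm_nonneg _)
    two_ne_zero).1 norm_sq_eq

theorem norm_eTprod_le_one {a : Π i, EuclideanSpace ℂ (Fin (d i))} (ha : ∀ i, ‖a i‖ ≤ 1) :
    ‖eTprod a‖ ≤ 1 :=
  (norm_eTprod a).trans_le (Finset.prod_le_one (fun _ _ => norm_nonneg _) fun i _ => ha i)

theorem eTprod_smul (c : Fin k → ℂ) (x : Π i, EuclideanSpace ℂ (Fin (d i))) :
    eTprod (fun i => c i • x i) = (∏ i, c i) • eTprod x := by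
  ext j
  simp [eTprod_apply, Finset.prod_mul_distrib]

theorem exists_eTprod_eq_smul [NeZero k] (c : ℂ) (x : Π i, EuclideanSpace ℂ (Fin (d i))) :
    ∃ y : Π i, EuclideanSpace ℂ (Fin (d i)), eTprod y = c • eTprod x :=
  ⟨fun i => (if i = 0 then c else 1) • x i, by
    rw [eTprod_smul (fun i => if i = 0 then c else 1), Finset.prod_ite_eq' Finset.univ 0,
      if_pos (Finset.mem_univ 0)]⟩

theorem continuous_eTprod :
    Continuous (eTprod : (Π i, EuclideanSpace ℂ (Fin (d i))) → _) := by
  refine (PiLp.continuous_toLp 2 _).comp ?_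
  fun_prop

end ProductTensor

section InjectiveNorm

variable {k : ℕ} {d : Fin k → ℕ} (T : EuclideanSpace ℂ (Π i, Fin (d i)))

theorem norm_inner_eTprod_le_norm {a : Π i, EuclideanSpace ℂ (Fin (d i))}
    (ha : ∀ i, ‖a i‖ ≤ 1) : ‖(inner ℂ (eTprod a) T : ℂ)‖ ≤ ‖T‖ :=
  (norm_inner_le_norm _ _).trans
    (mul_le_of_le_one_left (norm_nonneg T) (norm_eTprod_le_one ha))

theorem injNormE_nonneg : 0 ≤ injNormE T :=
  Real.sSup_nonneg (by rintro s ⟨a, -, rfl⟩; exact norm_nonneg _)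

theorem injNormE_le_norm : injNormE T ≤ ‖T‖ :=
  Real.sSup_le (by rintro s ⟨a, ha, rfl⟩; exact norm_inner_eTprod_le_norm T ha) (norm_nonneg T)

theorem norm_inner_eTprod_le_injNormE {a : Π i, EuclideanSpace ℂ (Fin (d i))}
    (ha : ∀ i, ‖a i‖ ≤ 1) : ‖(inner ℂ (eTprod a) T : ℂ)‖ ≤ injNormE T :=
  le_csSup ⟨‖T‖, by rintro s ⟨b, hb, rfl⟩; exact norm_inner_eTprod_le_norm T hb⟩ ⟨a, ha, rfl⟩

theorem norm_inner_eTprod_le_injNormE_mul_prod_norm (x : Π i, EuclideanSpace ℂ (Fin (d i))) :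
    ‖(inner ℂ (eTprod x) T : ℂ)‖ ≤ injNormE T * ∏ i, ‖x i‖ := by
  let u i := ((‖x i‖⁻¹ : ℝ) : ℂ) • x i
  have norm_u_le (i) : ‖u i‖ ≤ 1 := by
    rw [norm_smul, Complex.norm_real, norm_inv, norm_norm]
    exact inv_mul_le_one
  have norm_smul_u (i) : x i = (‖x i‖ : ℂ) • u i := by
    rcases eq_or_ne (x i) 0 with hx | hx
    · simp [u, hx]
    · simp [u, smul_smul, norm_ne_zero_iff.2 hx]
  have eTprod_eq : eTprod x = (∏ i, (‖x i‖ : ℂ)) • eTprod u := by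
    rw [← eTprod_smul (fun i => (‖x i‖ : ℂ)), ← funext norm_smul_u]
  calc ‖(inner ℂ (eTprod x) T : ℂ)‖
      = (∏ i, ‖x i‖) * ‖(inner ℂ (eTprod u) T : ℂ)‖ := by
        rw [eTprod_eq, inner_smul_left]
        simp
    _ ≤ (∏ i, ‖x i‖) * injNormE T := by
        gcongr
        exact norm_inner_eTprod_le_injNormE T norm_u_le
    _ = injNormE T * ∏ i, ‖x i‖ := mul_comm _ _

theorem injNormE_eTprod (x : Π i, EuclideanSpace ℂ (Fin (d i))) :
    injNormE (eTprod x) = ‖eTprod x‖ := by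
  refine (injNormE_le_norm _).antisymm ?_
  have norm_mul_self_le := norm_inner_eTprod_le_injNormE_mul_prod_norm (eTprod x) x
  rw [← norm_eTprod, inner_self_eq_norm_sq_to_K, norm_pow, RCLike.norm_ofReal, abs_norm, sq]
    at norm_mul_self_le
  rcases (norm_nonneg (eTprod x)).eq_or_lt with norm_eq | norm_pos
  · exact norm_eq ▸ injNormE_nonneg _
  · exact le_of_mul_le_mul_right norm_mul_self_le norm_pos

theorem exists_injNormE_eq_norm_inner :
    ∃ a : Π i, EuclideanSpace ℂ (Fin (d i)),
      (∀ i, ‖a i‖ ≤ 1) ∧ injNormE T = ‖(inner ℂ (eTprod a) T : ℂ)‖ := by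
  have isCompact_balls : IsCompact (Set.univ.pi fun i : Fin k =>
      Metric.closedBall (0 : EuclideanSpace ℂ (Fin (d i))) 1) :=
    isCompact_univ_pi fun i => isCompact_closedBall _ _
  have continuous_pairing : Continuous fun a : Π i, EuclideanSpace ℂ (Fin (d i)) =>
      ‖(inner ℂ (eTprod a) T : ℂ)‖ :=
    (continuous_eTprod.inner continuous_const).norm
  obtain ⟨a, ha, sSup_eq, -⟩ := isCompact_balls.exists_sSup_image_eq_and_ge
    ⟨fun _ => 0, by simp⟩ continuous_pairing.continuousOn
  refine ⟨a, fun i => by simpa using ha i (Set.mem_univ i), ?_⟩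
  rw [← sSup_eq, injNormE]
  congr 1
  ext s
  simp [Set.mem_pi, eq_comm]

variable {T}

theorem exists_eq_smul_eTprod_of_injNormE_eq_norm (hT : injNormE T = ‖T‖) :
    ∃ (c : ℂ) (a : Π i, EuclideanSpace ℂ (Fin (d i))), T = c • eTprod a := by
  obtain ⟨a, ha, attained⟩ := exists_injNormE_eq_norm_inner T
  have cauchy_schwarz_eq : ‖(inner ℂ (eTprod a) T : ℂ)‖ = ‖eTprod a‖ * ‖T‖ := by
    refine (norm_inner_le_norm _ _).antisymm ?_
    rw [← attained, hT]
    exact mul_le_of_le_one_left (norm_nonneg T) (norm_eTprod_le_one ha)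
  rcases ((norm_inner_eq_norm_tfae ℂ (eTprod a) T).out 0 2).1 cauchy_schwarz_eq with
    eTprod_eq_zero | ⟨c, hc⟩
  · refine ⟨0, a, ?_⟩
    rw [zero_smul, ← norm_eq_zero, ← hT, attained, eTprod_eq_zero, inner_zero_left, norm_zero]
  · exact ⟨c, a, hc⟩

theorem injNormE_eq_norm_iff [NeZero k] :
    injNormE T = ‖T‖ ↔ ∃ x : Π i, EuclideanSpace ℂ (Fin (d i)), T = eTprod x := by
  constructor
  · intro hT
    obtain ⟨c, a, rfl⟩ := exists_eq_smul_eTprod_of_injNormE_eq_norm hT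
    obtain ⟨x, hx⟩ := exists_eTprod_eq_smul c a
    exact ⟨x, hx.symm⟩
  · rintro ⟨x, rfl⟩
    exact injNormE_eTprod x

end InjectiveNorm

section ProjectiveNorm

variable {k : ℕ} {d : Fin k → ℕ} {T : EuclideanSpace ℂ (Π i, Fin (d i))}

/- Without factors, only the natural multiples of the unit tensor are sums of product tensors; on
all others `projNormE` is the junk value `sInf ∅ = 0`. -/
theorem exists_eq_sum_eTprod_of_projNormE_ne_zero (hT : projNormE T ≠ 0) :
    ∃ (r : ℕ) (x : Fin r → Π i, EuclideanSpace ℂ (Fin (d i))), T = ∑ j, eTprod (x j) := by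
  contrapose! hT
  simp [projNormE, hT]

theorem projNormE_le_sum_prod_norm {r : ℕ} {x : Fin r → Π i, EuclideanSpace ℂ (Fin (d i))}
    (hT : T = ∑ j, eTprod (x j)) : projNormE T ≤ ∑ j, ∏ i, ‖x j i‖ :=
  csInf_le ⟨0, by rintro s ⟨r, x, -, rfl⟩; positivity⟩ ⟨r, x, hT, rfl⟩

theorem norm_inner_le_injNormE_mul_projNormE (S : EuclideanSpace ℂ (Π i, Fin (d i)))
    (hT : ∃ (r : ℕ) (x : Fin r → Π i, EuclideanSpace ℂ (Fin (d i))), T = ∑ j, eTprod (x j)) :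
    ‖(inner ℂ S T : ℂ)‖ ≤ injNormE S * projNormE T := by
  rw [projNormE, ← smul_eq_mul, ← Real.sInf_smul_of_nonneg (injNormE_nonneg S)]
  obtain ⟨r₀, x₀, hx₀⟩ := hT
  refine le_csInf (Set.Nonempty.smul_set ⟨_, r₀, x₀, hx₀, rfl⟩) ?_
  rintro _ ⟨_, ⟨r, x, rfl, rfl⟩, rfl⟩
  calc ‖(inner ℂ S (∑ j, eTprod (x j)) : ℂ)‖
      ≤ ∑ j, ‖(inner ℂ S (eTprod (x j)) : ℂ)‖ := by
        rw [inner_sum]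
        exact norm_sum_le _ _
    _ ≤ ∑ j, injNormE S * ∏ i, ‖x j i‖ := by
        gcongr with j
        rw [norm_inner_symm]
        exact norm_inner_eTprod_le_injNormE_mul_prod_norm S (x j)
    _ = injNormE S • ∑ j, ∏ i, ‖x j i‖ := by rw [smul_eq_mul, Finset.mul_sum]

theorem norm_sq_le_injNormE_mul_projNormE
    (hT : ∃ (r : ℕ) (x : Fin r → Π i, EuclideanSpace ℂ (Fin (d i))), T = ∑ j, eTprod (x j)) :
    ‖T‖ ^ 2 ≤ injNormE T * projNormE T := by
  simpa only [inner_self_eq_norm_sq_to_K, norm_pow, RCLike.norm_ofReal, abs_norm] using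
    norm_inner_le_injNormE_mul_projNormE T hT

theorem projNormE_eTprod (x : Π i, EuclideanSpace ℂ (Fin (d i))) :
    projNormE (eTprod x) = ‖eTprod x‖ := by
  have eq_sum : eTprod x = ∑ _j : Fin 1, eTprod x := by simp
  refine le_antisymm (by simpa [norm_eTprod] using projNormE_le_sum_prod_norm eq_sum) ?_
  rw [projNormE]
  refine le_csInf ⟨_, 1, _, eq_sum, rfl⟩ ?_
  rintro s ⟨r, y, hy, rfl⟩
  simpa only [hy, norm_eTprod] using norm_sum_le Finset.univ fun j => eTprod (y j)

end ProjectiveNorm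

theorem exists_eq_eTprod_of_eq_sum_of_norm_eq_one {d : Fin 0 → ℕ}
    {T : EuclideanSpace ℂ (Π i, Fin (d i))} {r : ℕ}
    {x : Fin r → Π i, EuclideanSpace ℂ (Fin (d i))} (hT : T = ∑ j, eTprod (x j))
    (norm_eq : ‖T‖ = 1) : ∃ y : Π i, EuclideanSpace ℂ (Fin (d i)), T = eTprod y := by
  have T_eq : T = (r : ℂ) • eTprod isEmptyElim := by
    simp [hT, Subsingleton.elim (x _) isEmptyElim, Nat.cast_smul_eq_nsmul]
  have r_eq : r = 1 := by
    simpa [T_eq, norm_smul, norm_eTprod] using norm_eq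
  exact ⟨isEmptyElim, by simpa [r_eq] using T_eq⟩

theorem exists_eq_eTprod_of_projNormE_eq_one {k : ℕ} {d : Fin k → ℕ}
    {T : EuclideanSpace ℂ (Π i, Fin (d i))} (norm_eq : ‖T‖ = 1) (proj_eq : projNormE T = 1) :
    ∃ x : Π i, EuclideanSpace ℂ (Fin (d i)), T = eTprod x := by
  have decomposition := exists_eq_sum_eTprod_of_projNormE_ne_zero (proj_eq.trans_ne one_ne_zero)
  rcases k with _ | k
  · obtain ⟨r, x, hx⟩ := decomposition
    exact exists_eq_eTprod_of_eq_sum_of_norm_eq_one hx norm_eq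
  · have one_le_inj : 1 ≤ injNormE T := by
      simpa [norm_eq, proj_eq] using norm_sq_le_injNormE_mul_projNormE decomposition
    exact injNormE_eq_norm_iff.1 ((injNormE_le_norm T).antisymm (norm_eq ▸ one_le_inj))

theorem norm_eq_one_of_injNormE_eq_one_of_projNormE_eq_one {k : ℕ} {d : Fin k → ℕ}
    {T : EuclideanSpace ℂ (Π i, Fin (d i))} (inj_eq : injNormE T = 1)
    (proj_eq : projNormE T = 1) : ‖T‖ = 1 := by
  have norm_sq_le_one : ‖T‖ ^ 2 ≤ 1 := by
    simpa only [inj_eq, proj_eq, mul_one] using norm_sq_le_injNormE_mul_projNormE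
      (exists_eq_sum_eTprod_of_projNormE_ne_zero (proj_eq.trans_ne one_ne_zero))
  exact ((sq_le_one_iff₀ (norm_nonneg T)).1 norm_sq_le_one).antisymm
    (inj_eq ▸ injNormE_le_norm T)

theorem pure_separable_iff_norms_eq_one_general {k : ℕ} {d : Fin k → ℕ}
    (T : EuclideanSpace ℂ (Π i, Fin (d i))) :
    [‖T‖ = 1 ∧ ∃ x : Π i, EuclideanSpace ℂ (Fin (d i)), T = eTprod x,
      ‖T‖ = 1 ∧ projNormE T = 1,
      injNormE T = 1 ∧ projNormE T = 1].TFAE := by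
  tfae_have 1 → 3 := by
    rintro ⟨norm_eq, x, rfl⟩
    exact ⟨(injNormE_eTprod x).trans norm_eq, (projNormE_eTprod x).trans norm_eq⟩
  tfae_have 3 → 2 := fun ⟨inj_eq, proj_eq⟩ =>
    ⟨norm_eq_one_of_injNormE_eq_one_of_projNormE_eq_one inj_eq proj_eq, proj_eq⟩
  tfae_have 2 → 1 := fun ⟨norm_eq, proj_eq⟩ =>
    ⟨norm_eq, exists_eq_eTprod_of_projNormE_eq_one norm_eq proj_eq⟩
  tfae_finish

/-- A multipartite pure state (a unit vector `ψ ∈ H₁ ⊗ ⋯ ⊗ H_k`) is separable, i.e. a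
product tensor, if and only if its injective and projective tensor norms both equal `1`. -/
theorem pure_separable_iff_norms_eq_one {k : ℕ} {d : Fin k → ℕ}
    (ψ : EuclideanSpace ℂ (Π i, Fin (d i))) (hψ : ‖ψ‖ = 1) :
    (∃ x : Π i, EuclideanSpace ℂ (Fin (d i)), ψ = eTprod x) ↔
      (injNormE ψ = 1 ∧ projNormE ψ = 1) := by
  have norms_iff := (pure_separable_iff_norms_eq_one_general ψ).out 0 2 rfl rfl
  simpa only [hψ, true_and] using norms_iff
end

section
/- For any tensor $A \in \mathbb{R}^{n_1 \times \cdots \times n_m}$ and any positive integer $r$, the best nuclear rank-$r$ approximation problem $\mathrm{argmin}\{\|A - X\| : \mathrm{rank}_*(X) \le r\}$ always has a solution; that is, the Euclidean distance from $A$ to the set of tensors of nuclear rank at most $r$ is attained. -/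
/-- The simple (product) tensor `x¹ ⊗ ⋯ ⊗ xᵐ` of a family of real vectors, realized as
the array `j ↦ ∏ i, x i (j i)` in `ℝ^{n₁ × ⋯ × n_m}` with its Euclidean norm. -/
noncomputable def rTprod {m : ℕ} {n : Fin m → ℕ} (x : Π i, EuclideanSpace ℝ (Fin (n i))) :
    EuclideanSpace ℝ (Π i, Fin (n i)) :=
  (WithLp.equiv 2 _).symm fun j => ∏ i, x i (j i)

/-- The nuclear (projective) norm of a real tensor `X ∈ ℝ^{n₁ × ⋯ × n_m}`. -/
noncomputable def nuclearNorm {m : ℕ} {n : Fin m → ℕ}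
    (X : EuclideanSpace ℝ (Π i, Fin (n i))) : ℝ :=
  sInf {s | ∃ (r : ℕ) (x : Fin r → Π i, EuclideanSpace ℝ (Fin (n i))),
    X = ∑ k, rTprod (x k) ∧ s = ∑ k, ∏ i, ‖x k i‖}

/-- `X` has nuclear rank at most `r`: some decomposition of `X` into at most `r` rank-one
terms attains the nuclear norm. -/
noncomputable def nuclearRankLE {m : ℕ} {n : Fin m → ℕ}
    (X : EuclideanSpace ℝ (Π i, Fin (n i))) (r : ℕ) : Prop :=
  ∃ (r' : ℕ), r' ≤ r ∧ ∃ x : Fin r' → Π i, EuclideanSpace ℝ (Fin (n i)),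
    X = ∑ k, rTprod (x k) ∧ ∑ k, ∏ i, ‖x k i‖ = nuclearNorm X

/-!
The nuclear norm is an infimum of costs that add under concatenation of decompositions, hence it is
subadditive; being bounded by a multiple of the Euclidean norm, it is Lipschitz. Normalizing all
vectors of an optimal decomposition of `X` writes `X` as `‖X‖_* • ∑ k, w k • (u k 1 ⊗ ⋯ ⊗ u k m)`
with weights `w k ∈ [0, 1]` of sum at most `1` and vectors `u k i` in closed unit balls, and
conversely any such representation yields an optimal decomposition. As the parameters `(w, u)`
range over a compact space and the relation is closed, its projection, the set of tensors of
nuclear rank at most `r`, is closed, and in a finite-dimensional space distances to nonempty closed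
sets are attained. Tensors of order zero are treated apart: the empty product is `1`, so scalars
cannot be absorbed into a factor, but then only finitely many tensors have nuclear rank at most `r`.
-/

open Metric unitInterval
open scoped Pointwise

variable {m : ℕ} {n : Fin m → ℕ}

section RankOne

theorem rTprod_apply (x : Π i, EuclideanSpace ℝ (Fin (n i))) (j : Π i, Fin (n i)) :
    rTprod x j = ∏ i, x i (j i) :=
  rfl

theorem continuous_rTprod : Continuous (rTprod (n := n)) :=
  (PiLp.continuous_toLp 2 _).comp (by fun_prop)

theorem rTprod_smul (a : Fin m → ℝ) (x : Π i, EuclideanSpace ℝ (Fin (n i))) :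
    rTprod (fun i ↦ a i • x i) = (∏ i, a i) • rTprod x := by
  ext j
  simp [rTprod_apply, Finset.prod_mul_distrib]

theorem rTprod_zero [NeZero m] : rTprod (0 : Π i, EuclideanSpace ℝ (Fin (n i))) = 0 := by
  ext j
  simp [rTprod_apply, NeZero.ne m]

theorem prod_norm_smul_rTprod_normalize (x : Π i, EuclideanSpace ℝ (Fin (n i))) :
    (∏ i, ‖x i‖) • rTprod (fun i ↦ NormedSpace.normalize (x i)) = rTprod x := by
  simp_rw [← rTprod_smul, NormedSpace.norm_smul_normalize]

theorem exists_rTprod_eq_smul_rTprod [NeZero m] (c : ℝ) (x : Π i, EuclideanSpace ℝ (Fin (n i))) :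
    ∃ y, rTprod y = c • rTprod x ∧ ∏ i, ‖y i‖ = |c| * ∏ i, ‖x i‖ := by
  refine ⟨fun i ↦ (Pi.mulSingle 0 c : Fin m → ℝ) i • x i, ?_, ?_⟩
  · rw [rTprod_smul, Fintype.prod_pi_mulSingle']
  · simp_rw [norm_smul, Finset.prod_mul_distrib, ← norm_prod, Fintype.prod_pi_mulSingle',
      Real.norm_eq_abs]

theorem rTprod_single_one (k : Π i, Fin (n i)) :
    rTprod (fun i ↦ EuclideanSpace.single (k i) (1 : ℝ)) = EuclideanSpace.single k 1 := by
  ext j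
  simp [rTprod_apply, Finset.prod_ite_zero, funext_iff]

theorem sum_smul_rTprod_single_one (X : EuclideanSpace ℝ (Π i, Fin (n i))) :
    ∑ k, X k • rTprod (fun i ↦ EuclideanSpace.single (k i) (1 : ℝ)) = X := by
  ext j
  simp [rTprod_single_one, Pi.single_apply]

end RankOne

section NuclearNorm

variable {κ : Type*} [Fintype κ]

/-- The costs of all finite decompositions of `X` into rank-one terms; their infimum is the
nuclear norm of `X`. -/
def nuclearCosts (X : EuclideanSpace ℝ (Π i, Fin (n i))) : Set ℝ :=
  {s | ∃ (r : ℕ) (x : Fin r → Π i, EuclideanSpace ℝ (Fin (n i))),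
    X = ∑ k, rTprod (x k) ∧ s = ∑ k, ∏ i, ‖x k i‖}

theorem nuclearNorm_eq_sInf_nuclearCosts (X : EuclideanSpace ℝ (Π i, Fin (n i))) :
    nuclearNorm X = sInf (nuclearCosts X) :=
  rfl

theorem nonneg_of_mem_nuclearCosts {X : EuclideanSpace ℝ (Π i, Fin (n i))} {s : ℝ}
    (hs : s ∈ nuclearCosts X) : 0 ≤ s := by
  obtain ⟨r, x, -, rfl⟩ := hs
  positivity

theorem bddBelow_nuclearCosts (X : EuclideanSpace ℝ (Π i, Fin (n i))) :
    BddBelow (nuclearCosts X) :=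
  ⟨0, fun _ ↦ nonneg_of_mem_nuclearCosts⟩

theorem sum_prod_norm_mem_nuclearCosts (x : κ → Π i, EuclideanSpace ℝ (Fin (n i))) :
    ∑ k, ∏ i, ‖x k i‖ ∈ nuclearCosts (∑ k, rTprod (x k)) := by
  let e := (Fintype.equivFin κ).symm
  exact ⟨Fintype.card κ, x ∘ e, (e.sum_comp fun k ↦ rTprod (x k)).symm,
    (e.sum_comp fun k ↦ ∏ i, ‖x k i‖).symm⟩

theorem sum_abs_mul_prod_norm_mem_nuclearCosts [NeZero m] (c : κ → ℝ)
    (x : κ → Π i, EuclideanSpace ℝ (Fin (n i))) :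
    ∑ k, |c k| * ∏ i, ‖x k i‖ ∈ nuclearCosts (∑ k, c k • rTprod (x k)) := by
  choose y hy hnorm using fun k ↦ exists_rTprod_eq_smul_rTprod (c k) (x k)
  simpa only [hy, hnorm] using sum_prod_norm_mem_nuclearCosts y

theorem sum_abs_apply_mem_nuclearCosts [NeZero m] (X : EuclideanSpace ℝ (Π i, Fin (n i))) :
    ∑ k, |X k| ∈ nuclearCosts X := by
  have hcost := sum_abs_mul_prod_norm_mem_nuclearCosts (fun k ↦ X k)
    fun k i ↦ EuclideanSpace.single (k i) (1 : ℝ)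
  rw [sum_smul_rTprod_single_one] at hcost
  simpa using hcost

theorem nuclearCosts_add_subset (X Y : EuclideanSpace ℝ (Π i, Fin (n i))) :
    nuclearCosts X + nuclearCosts Y ⊆ nuclearCosts (X + Y) := by
  rintro _ ⟨_, ⟨p, x, rfl, rfl⟩, _, ⟨q, y, rfl, rfl⟩, rfl⟩
  simpa using sum_prod_norm_mem_nuclearCosts (Sum.elim x y)

theorem nuclearNorm_nonneg (X : EuclideanSpace ℝ (Π i, Fin (n i))) : 0 ≤ nuclearNorm X :=
  Real.sInf_nonneg fun _ ↦ nonneg_of_mem_nuclearCosts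

theorem nuclearNorm_le_of_mem_nuclearCosts {X : EuclideanSpace ℝ (Π i, Fin (n i))} {s : ℝ}
    (hs : s ∈ nuclearCosts X) : nuclearNorm X ≤ s :=
  csInf_le (bddBelow_nuclearCosts X) hs

theorem nuclearNorm_zero : nuclearNorm (0 : EuclideanSpace ℝ (Π i, Fin (n i))) = 0 :=
  le_antisymm (nuclearNorm_le_of_mem_nuclearCosts ⟨0, Fin.elim0, by simp, by simp⟩)
    (nuclearNorm_nonneg 0)

theorem nuclearNorm_add_le [NeZero m] (X Y : EuclideanSpace ℝ (Π i, Fin (n i))) :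
    nuclearNorm (X + Y) ≤ nuclearNorm X + nuclearNorm Y := by
  have nonempty (Z : EuclideanSpace ℝ (Π i, Fin (n i))) : (nuclearCosts Z).Nonempty :=
    ⟨_, sum_abs_apply_mem_nuclearCosts Z⟩
  simp_rw [nuclearNorm_eq_sInf_nuclearCosts]
  rw [← csInf_add (nonempty X) (bddBelow_nuclearCosts X) (nonempty Y) (bddBelow_nuclearCosts Y)]
  exact csInf_le_csInf (bddBelow_nuclearCosts _) ((nonempty X).add (nonempty Y))
    (nuclearCosts_add_subset X Y)

theorem nuclearNorm_le_card_mul_norm [NeZero m] (X : EuclideanSpace ℝ (Π i, Fin (n i))) :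
    nuclearNorm X ≤ Fintype.card (Π i, Fin (n i)) * ‖X‖ :=
  calc
    nuclearNorm X ≤ ∑ k, |X k| :=
      nuclearNorm_le_of_mem_nuclearCosts (sum_abs_apply_mem_nuclearCosts X)
    _ ≤ ∑ _k : Π i, Fin (n i), ‖X‖ := Finset.sum_le_sum fun k _ ↦ PiLp.norm_apply_le X k
    _ = Fintype.card (Π i, Fin (n i)) * ‖X‖ := by simp

theorem continuous_nuclearNorm [NeZero m] : Continuous (nuclearNorm (n := n)) := by
  refine (LipschitzWith.of_le_add_mul (Fintype.card (Π i, Fin (n i))) fun X Y ↦ ?_).continuous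
  calc
    nuclearNorm X = nuclearNorm (Y + (X - Y)) := by rw [add_sub_cancel]
    _ ≤ nuclearNorm Y + nuclearNorm (X - Y) := nuclearNorm_add_le _ _
    _ ≤ nuclearNorm Y + Fintype.card (Π i, Fin (n i)) * dist X Y := by
      rw [dist_eq_norm]
      gcongr
      exact nuclearNorm_le_card_mul_norm _

end NuclearNorm

section NuclearRank

variable {r : ℕ} {X : EuclideanSpace ℝ (Π i, Fin (n i))}

theorem nuclearRankLE_zero (r : ℕ) :
    nuclearRankLE (0 : EuclideanSpace ℝ (Π i, Fin (n i))) r :=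
  ⟨0, r.zero_le, Fin.elim0, by simp, by simp [nuclearNorm_zero]⟩

/-- Weights in the unit interval together with vectors in closed unit balls, the parameters of a
normalized sum of `r` rank-one tensors. Subtypes are used so that this space is compact. -/
abbrev NormalizedParameters (n : Fin m → ℕ) (r : ℕ) : Type :=
  (Fin r → I) × (Fin r → Π i, closedBall (0 : EuclideanSpace ℝ (Fin (n i))) 1)

/-- The weighted sum `∑ k, w k • (u k 1 ⊗ ⋯ ⊗ u k m)` of the rank-one tensors given by
`p = (w, u)`. -/
noncomputable def weightedSum (p : NormalizedParameters n r) :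
    EuclideanSpace ℝ (Π i, Fin (n i)) :=
  ∑ k, (p.1 k : ℝ) • rTprod fun i ↦ (p.2 k i).1

theorem continuous_weightedSum : Continuous (weightedSum (n := n) (r := r)) := by
  have hrTprod := continuous_rTprod (n := n)
  unfold weightedSum
  fun_prop

/-- The relation that `p` represents `X` as `‖X‖_*` times a subconvex combination of rank-one
tensors of norm at most `1`: a closed condition that characterizes nuclear rank at most `r`. -/
def IsNormalizedDecomposition (X : EuclideanSpace ℝ (Π i, Fin (n i)))
    (p : NormalizedParameters n r) : Prop :=
  ∑ k, (p.1 k : ℝ) ≤ 1 ∧ X = nuclearNorm X • weightedSum p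

theorem IsNormalizedDecomposition.nuclearRankLE [NeZero m] {p : NormalizedParameters n r}
    (hp : IsNormalizedDecomposition X p) : nuclearRankLE X r := by
  obtain ⟨hweight, hsum⟩ := hp
  choose y hy hnorm using fun k ↦
    exists_rTprod_eq_smul_rTprod (nuclearNorm X * p.1 k) fun i ↦ (p.2 k i).1
  have hX : X = ∑ k, rTprod (y k) := by
    simpa only [hy, mul_smul, ← Finset.smul_sum, weightedSum] using hsum
  have hterm (k : Fin r) : ∏ i, ‖y k i‖ ≤ nuclearNorm X * p.1 k := by
    have hc : 0 ≤ nuclearNorm X * p.1 k := mul_nonneg (nuclearNorm_nonneg X) (p.1 k).2.1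
    rw [hnorm, abs_of_nonneg hc]
    exact mul_le_of_le_one_right hc (Finset.prod_le_one (fun _ _ ↦ norm_nonneg _)
      fun i _ ↦ mem_closedBall_zero_iff.mp (p.2 k i).2)
  refine ⟨r, le_rfl, y, hX, le_antisymm ?_ (nuclearNorm_le_of_mem_nuclearCosts ⟨r, y, hX, rfl⟩)⟩
  calc
    ∑ k, ∏ i, ‖y k i‖ ≤ ∑ k, nuclearNorm X * p.1 k := Finset.sum_le_sum fun k _ ↦ hterm k
    _ = nuclearNorm X * ∑ k, (p.1 k : ℝ) := (Finset.mul_sum ..).symm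
    _ ≤ nuclearNorm X := mul_le_of_le_one_right (nuclearNorm_nonneg X) hweight

theorem nuclearRankLE.exists_decomposition [NeZero m] (hX : nuclearRankLE X r) :
    ∃ x : Fin r → Π i, EuclideanSpace ℝ (Fin (n i)),
      X = ∑ k, rTprod (x k) ∧ ∑ k, ∏ i, ‖x k i‖ = nuclearNorm X := by
  obtain ⟨r', hr', x, hsum, hnorm⟩ := hX
  obtain ⟨d, rfl⟩ := Nat.exists_eq_add_of_le hr'
  exact ⟨Fin.append x 0, by simp [Fin.sum_univ_add, rTprod_zero, hsum],
    by simp [Fin.sum_univ_add, hnorm, NeZero.ne m]⟩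

theorem nuclearRankLE.exists_isNormalizedDecomposition [NeZero m] (hX : nuclearRankLE X r) :
    ∃ p : NormalizedParameters n r, IsNormalizedDecomposition X p := by
  obtain ⟨x, hsum, hnorm⟩ := hX.exists_decomposition
  have hterm_nonneg (k : Fin r) : 0 ≤ ∏ i, ‖x k i‖ := by positivity
  have hterm_le (k : Fin r) : ∏ i, ‖x k i‖ ≤ nuclearNorm X :=
    hnorm ▸ Finset.single_le_sum (fun k _ ↦ hterm_nonneg k) (Finset.mem_univ k)
  let w (k : Fin r) : I := ⟨(∏ i, ‖x k i‖) / nuclearNorm X,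
    div_nonneg (hterm_nonneg k) (nuclearNorm_nonneg X),
    div_le_one_of_le₀ (hterm_le k) (nuclearNorm_nonneg X)⟩
  let u (k : Fin r) (i : Fin m) : closedBall (0 : EuclideanSpace ℝ (Fin (n i))) 1 :=
    ⟨NormedSpace.normalize (x k i), by
      rw [mem_closedBall_zero_iff, NormedSpace.normalize, norm_smul, norm_inv, norm_norm]
      exact inv_mul_le_one⟩
  -- If the nuclear norm is zero, then so is every term, in accordance with `0 / 0 = 0`.
  have hmul (k : Fin r) : nuclearNorm X * w k = ∏ i, ‖x k i‖ :=
    mul_div_cancel_of_imp' fun h ↦ le_antisymm (h ▸ hterm_le k) (hterm_nonneg k)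
  refine ⟨(w, u), ?_, ?_⟩
  · simp only [w, ← Finset.sum_div, hnorm, div_self_le_one]
  · simp only [weightedSum, Finset.smul_sum, smul_smul, hmul, u, prod_norm_smul_rTprod_normalize]
    exact hsum

theorem nuclearRankLE_iff_exists_isNormalizedDecomposition [NeZero m] :
    nuclearRankLE X r ↔ ∃ p : NormalizedParameters n r, IsNormalizedDecomposition X p :=
  ⟨nuclearRankLE.exists_isNormalizedDecomposition, fun ⟨_, hp⟩ ↦ hp.nuclearRankLE⟩

theorem isClosed_setOf_isNormalizedDecomposition [NeZero m] (r : ℕ) :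
    IsClosed {q : EuclideanSpace ℝ (Π i, Fin (n i)) × NormalizedParameters n r |
      IsNormalizedDecomposition q.1 q.2} := by
  have hsum : Continuous (weightedSum (n := n) (r := r)) := continuous_weightedSum
  have hnorm : Continuous (nuclearNorm (n := n)) := continuous_nuclearNorm
  unfold IsNormalizedDecomposition
  exact (isClosed_le (by fun_prop) continuous_const).and (isClosed_eq (by fun_prop) (by fun_prop))

theorem isClosed_setOf_nuclearRankLE_of_neZero [NeZero m] (r : ℕ) :
    IsClosed {X : EuclideanSpace ℝ (Π i, Fin (n i)) | nuclearRankLE X r} := by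
  convert isClosedMap_fst_of_compactSpace _ (isClosed_setOf_isNormalizedDecomposition (n := n) r)
  ext X
  simp [nuclearRankLE_iff_exists_isNormalizedDecomposition]

theorem finite_setOf_nuclearRankLE_of_order_zero {n : Fin 0 → ℕ} (r : ℕ) :
    {X : EuclideanSpace ℝ (Π i, Fin (n i)) | nuclearRankLE X r}.Finite := by
  refine ((Set.finite_Iic r).image fun k : ℕ ↦ k • rTprod (n := n) 0).subset ?_
  rintro _ ⟨k, hk, x, rfl, -⟩
  exact ⟨k, hk, by simp [Subsingleton.elim x 0]⟩

theorem isClosed_setOf_nuclearRankLE (r : ℕ) :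
    IsClosed {X : EuclideanSpace ℝ (Π i, Fin (n i)) | nuclearRankLE X r} := by
  obtain rfl | _ := eq_zero_or_neZero m
  · exact (finite_setOf_nuclearRankLE_of_order_zero r).isClosed
  · exact isClosed_setOf_nuclearRankLE_of_neZero r

end NuclearRank

/-- The best nuclear rank-`r` approximation problem
`argmin { ‖A - X‖ : rank_*(X) ≤ r }` always has a solution: the Euclidean distance from
`A` to the set of tensors of nuclear rank at most `r` is attained. -/
theorem best_nuclearRank_approximation_exists {m : ℕ} {n : Fin m → ℕ}
    (A : EuclideanSpace ℝ (Π i, Fin (n i))) (r : ℕ) (hr : 0 < r) :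
    ∃ X : EuclideanSpace ℝ (Π i, Fin (n i)), nuclearRankLE X r ∧
      ∀ Y : EuclideanSpace ℝ (Π i, Fin (n i)), nuclearRankLE Y r → ‖A - X‖ ≤ ‖A - Y‖ := by
  obtain ⟨X, hX, hdist⟩ :=
    (isClosed_setOf_nuclearRankLE r).exists_infDist_eq_dist ⟨0, nuclearRankLE_zero r⟩ A
  refine ⟨X, hX, fun Y hY ↦ ?_⟩
  simp_rw [← dist_eq_norm]
  exact hdist ▸ infDist_le_dist_of_mem hY
end
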